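/- arXiv:1612.07596 — 6 statements merged into one kernel-verified Lean document; each statement's English description precedes it below -/
import Mathlib

section
/- Let m ≥ 1 and let A be a real (2m)×(2m) matrix, written in m×m blocks as A = [[A₁₁, A₁₂],[A₂₁, A₂₂]], which is symmetric (Aᵀ = A). Then A commutes with the block-diagonal matrix diag(o, o) for every o in the orthogonal group O(m) if and only if there exist real numbers f, h, b such that A₁₁ = f·1ₘ, A₂₂ = h·1ₘ, and A₁₂ = A₂₁ = b·1ₘ (where 1ₘ is the m×m identity matrix). -/
/-!
Commuting with `diag(o, o)` means that each of the four blocks commutes with every orthogonal `o`.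
A matrix commuting with `O(m)` is scalar: commuting with the reflections in the coordinate
hyperplanes kills the off-diagonal entries, and commuting with the transposition matrices makes
the diagonal entries equal. Finally, symmetry of `A` gives `A₂₁ = A₁₂ᵀ`, so the two off-diagonal
blocks carry the same scalar.
-/

/-- The commutant of `O(m)` in the real `m × m` matrices consists of the scalar matrices. -/
theorem eq_smul_one_of_commute_orthogonal {m : ℕ} (hm : 1 ≤ m) (B : Matrix (Fin m) (Fin m) ℝ)
    (hB : ∀ o ∈ Matrix.orthogonalGroup (Fin m) ℝ, B * o = o * B) :
    ∃ c : ℝ, B = c • (1 : Matrix (Fin m) (Fin m) ℝ) := by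
  have hoff : ∀ i j, i ≠ j → B i j = 0 := by
    intro i j hij
    -- the reflection negating the `i`-th coordinate
    have h := hB (Matrix.diagonal (fun k => if k = i then -1 else 1)) (by
      rw [Matrix.mem_orthogonalGroup_iff,
        Matrix.diagonal_transpose, Matrix.diagonal_mul_diagonal, ← Matrix.diagonal_one]
      congr 1
      funext k
      by_cases hk : k = i <;> simp [hk])
    have h' := congrFun (congrFun h i) j
    rw [Matrix.mul_diagonal, Matrix.diagonal_mul] at h'
    simp only [hij.symm, if_true, if_false] at h'
    linarith
  have hdiag : ∀ i j, B i i = B j j := by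
    intro i j
    have h := hB (Equiv.swap i j).toPEquiv.toMatrix (by
      rw [Matrix.mem_orthogonalGroup_iff,
        ← PEquiv.toMatrix_symm,
        ← PEquiv.toMatrix_trans, ← Equiv.toPEquiv_symm, ← Equiv.toPEquiv_trans]
      simp)
    have h' := congrFun (congrFun h i) j
    rw [PEquiv.toMatrix_toPEquiv_mul, PEquiv.mul_toMatrix_toPEquiv] at h'
    simpa using h'
  refine ⟨B ⟨0, hm⟩ ⟨0, hm⟩, ?_⟩
  ext i j
  by_cases hij : i = j
  · subst hij
    simpa using hdiag _ _
  · simpa [Matrix.one_apply_ne hij] using hoff i j hij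

/-- **O(m) case of the commutant Lemma.**
A symmetric real `(2m)×(2m)` matrix, written in `m×m` blocks, commutes with the
block-diagonal matrix `diag(o, o)` for every `o` in the orthogonal group `O(m)`
if and only if its blocks are `A₁₁ = f·1`, `A₂₂ = h·1`, `A₁₂ = A₂₁ = b·1` for
some real numbers `f, h, b`. -/
theorem statement0 (m : ℕ) (hm : 1 ≤ m)
    (A : Matrix (Fin m ⊕ Fin m) (Fin m ⊕ Fin m) ℝ) (hA : A.IsSymm) :
    (∀ o : Matrix.orthogonalGroup (Fin m) ℝ,
        A * Matrix.fromBlocks (o : Matrix (Fin m) (Fin m) ℝ) 0 0 (o : Matrix (Fin m) (Fin m) ℝ)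
          = Matrix.fromBlocks (o : Matrix (Fin m) (Fin m) ℝ) 0 0 (o : Matrix (Fin m) (Fin m) ℝ) * A)
      ↔ ∃ f h b : ℝ,
          A.toBlocks₁₁ = f • (1 : Matrix (Fin m) (Fin m) ℝ) ∧
          A.toBlocks₂₂ = h • (1 : Matrix (Fin m) (Fin m) ℝ) ∧
          A.toBlocks₁₂ = b • (1 : Matrix (Fin m) (Fin m) ℝ) ∧
          A.toBlocks₂₁ = b • (1 : Matrix (Fin m) (Fin m) ℝ) := by
  constructor
  · intro H
    have key : ∀ o ∈ Matrix.orthogonalGroup (Fin m) ℝ,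
        A.toBlocks₁₁ * o = o * A.toBlocks₁₁ ∧ A.toBlocks₁₂ * o = o * A.toBlocks₁₂ ∧
        A.toBlocks₂₁ * o = o * A.toBlocks₂₁ ∧ A.toBlocks₂₂ * o = o * A.toBlocks₂₂ := by
      intro o ho
      have h := H ⟨o, ho⟩
      rw [← Matrix.fromBlocks_toBlocks A, Matrix.fromBlocks_multiply,
        Matrix.fromBlocks_multiply, Matrix.fromBlocks_inj] at h
      simpa using h
    obtain ⟨f, hf⟩ := eq_smul_one_of_commute_orthogonal hm _ fun o ho => (key o ho).1
    obtain ⟨b, hb⟩ := eq_smul_one_of_commute_orthogonal hm _ fun o ho => (key o ho).2.1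
    obtain ⟨h, hh⟩ := eq_smul_one_of_commute_orthogonal hm _ fun o ho => (key o ho).2.2.2
    refine ⟨f, h, b, hf, hh, hb, ?_⟩
    have ht : A.toBlocks₂₁ = A.toBlocks₁₂.transpose := by
      ext i j
      exact hA.apply (Sum.inl j) (Sum.inr i)
    rw [ht, hb, Matrix.transpose_smul, Matrix.transpose_one]
  · rintro ⟨f, h, b, hf, hh, hb, hb'⟩ o
    rw [← Matrix.fromBlocks_toBlocks A, Matrix.fromBlocks_multiply,
      Matrix.fromBlocks_multiply, hf, hh, hb, hb']
    simp
end

section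
/- Let m ≥ 3 and let A be a real (2m)×(2m) matrix, written in m×m blocks as A = [[A₁₁, A₁₂],[A₂₁, A₂₂]], which is symmetric (Aᵀ = A). Then A commutes with the block-diagonal matrix diag(o, o) for every o in the special orthogonal group SO(m) if and only if there exist real numbers f, h, b such that A₁₁ = f·1ₘ, A₂₂ = h·1ₘ, and A₁₂ = A₂₁ = b·1ₘ (where 1ₘ is the m×m identity matrix). -/
/-!
Comparing blocks, `A` commutes with every `diag(o, o)` iff each of its four blocks commutes with
`SO(m)`, so the point is that the commutant of `SO(m)` consists of scalar matrices when `m ≥ 3`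
(`eq_smul_one_of_commute_specialOrthogonalGroup`). Two finite families of elements of `SO(m)`
suffice: diagonal sign matrices with exactly two entries `-1` kill the off-diagonal entries, and
even permutation matrices (products of two transpositions) identify the diagonal entries.
The third index available for `m ≥ 3` is used in both steps. Symmetry of `A` then makes the scalars
of the two off-diagonal blocks agree.
-/

open Matrix

lemma exists_third_index {m : ℕ} (hm : 3 ≤ m) (i j : Fin m) : ∃ k, k ≠ i ∧ k ≠ j := by
  have hcard : ({i, j} : Finset (Fin m)).card < (Finset.univ : Finset (Fin m)).card := by
    rw [Finset.card_univ, Fintype.card_fin]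
    exact lt_of_le_of_lt Finset.card_le_two hm
  obtain ⟨k, -, hk⟩ := Finset.exists_mem_notMem_of_card_lt_card hcard
  exact ⟨k, by simpa using hk⟩

/-- The diagonal matrix with entries `-1` at two distinct places `i`, `k` and `1` elsewhere is a
special orthogonal matrix. -/
lemma diagonal_signs_mem_specialOrthogonalGroup {m : ℕ} {i k : Fin m} (hik : k ≠ i) :
    (diagonal fun l => if l = i ∨ l = k then (-1 : ℝ) else 1) ∈
      specialOrthogonalGroup (Fin m) ℝ := by
  rw [mem_specialOrthogonalGroup_iff, mem_orthogonalGroup_iff]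
  constructor
  · rw [diagonal_transpose, diagonal_mul_diagonal, ← diagonal_one]
    congr 1
    funext l
    by_cases h : l = i ∨ l = k <;> simp [h]
  · rw [det_diagonal, Finset.prod_ite, Finset.prod_const_one, mul_one, Finset.prod_const]
    have hset : (Finset.univ.filter fun l => l = i ∨ l = k) = {i, k} := by
      ext l
      simp
    rw [hset, Finset.card_pair hik.symm]
    norm_num

lemma permMatrix_mem_specialOrthogonalGroup {m : ℕ} {σ : Equiv.Perm (Fin m)}
    (hσ : Equiv.Perm.sign σ = 1) :
    σ.permMatrix ℝ ∈ specialOrthogonalGroup (Fin m) ℝ := by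
  rw [mem_specialOrthogonalGroup_iff, mem_orthogonalGroup_iff]
  constructor
  · rw [transpose_permMatrix, ← permMatrix_mul]
    simp
  · rw [det_permutation, hσ]
    simp

/-- For `m ≥ 3`, a matrix commuting with all of `SO(m)` is scalar. -/
lemma eq_smul_one_of_commute_specialOrthogonalGroup {m : ℕ} (hm : 3 ≤ m)
    (B : Matrix (Fin m) (Fin m) ℝ)
    (hB : ∀ o ∈ specialOrthogonalGroup (Fin m) ℝ, B * o = o * B) :
    ∃ c : ℝ, B = c • (1 : Matrix (Fin m) (Fin m) ℝ) := by
  have hoff : ∀ i j, i ≠ j → B i j = 0 := by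
    intro i j hij
    obtain ⟨k, hki, hkj⟩ := exists_third_index hm i j
    -- The sign matrix is `-1` at `i` and `1` at `j`, so the `(i, j)` entry reads `B i j = -B i j`.
    have h := congrFun (congrFun (hB _ (diagonal_signs_mem_specialOrthogonalGroup hki)) i) j
    rw [mul_diagonal, diagonal_mul] at h
    simp only [hij.symm, hkj.symm, or_self, if_false, true_or, if_true] at h
    linarith
  have hdiag : ∀ i j, B i i = B j j := by
    intro i j
    rcases eq_or_ne i j with rfl | hij
    · rfl
    obtain ⟨k, hki, hkj⟩ := exists_third_index hm i j
    -- An even permutation sending `i` to `j`.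
    let σ : Equiv.Perm (Fin m) := Equiv.swap i j * Equiv.swap j k
    have hsign : Equiv.Perm.sign σ = 1 := by
      simp [σ, Equiv.Perm.sign_swap hij, Equiv.Perm.sign_swap hkj.symm]
    have hσ : σ i = j := by
      simp [σ, Equiv.swap_apply_of_ne_of_ne hij hki.symm]
    have h := congrFun (congrFun (hB _ (permMatrix_mem_specialOrthogonalGroup hsign)) i) j
    rw [Equiv.Perm.permMatrix, PEquiv.toMatrix_toPEquiv_mul, PEquiv.mul_toMatrix_toPEquiv] at h
    simpa [hσ, (Equiv.symm_apply_eq σ).2 hσ.symm] using h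
  refine ⟨B ⟨0, by omega⟩ ⟨0, by omega⟩, ?_⟩
  ext i j
  rcases eq_or_ne i j with rfl | hij
  · simpa using hdiag _ _
  · simp [hoff i j hij, hij]

/-- **SO(m), m ≥ 3, case of the commutant Lemma.**
A symmetric real `(2m)×(2m)` matrix, written in `m×m` blocks, commutes with the
block-diagonal matrix `diag(o, o)` for every `o` in the special orthogonal group
`SO(m)` (m ≥ 3) if and only if its blocks are `A₁₁ = f·1`, `A₂₂ = h·1`,
`A₁₂ = A₂₁ = b·1` for some real numbers `f, h, b`. -/
theorem statement1 (m : ℕ) (hm : 3 ≤ m)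
    (A : Matrix (Fin m ⊕ Fin m) (Fin m ⊕ Fin m) ℝ) (hA : A.IsSymm) :
    (∀ o : Matrix.specialOrthogonalGroup (Fin m) ℝ,
        A * Matrix.fromBlocks (o : Matrix (Fin m) (Fin m) ℝ) 0 0 (o : Matrix (Fin m) (Fin m) ℝ)
          = Matrix.fromBlocks (o : Matrix (Fin m) (Fin m) ℝ) 0 0 (o : Matrix (Fin m) (Fin m) ℝ) * A)
      ↔ ∃ f h b : ℝ,
          A.toBlocks₁₁ = f • (1 : Matrix (Fin m) (Fin m) ℝ) ∧
          A.toBlocks₂₂ = h • (1 : Matrix (Fin m) (Fin m) ℝ) ∧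
          A.toBlocks₁₂ = b • (1 : Matrix (Fin m) (Fin m) ℝ) ∧
          A.toBlocks₂₁ = b • (1 : Matrix (Fin m) (Fin m) ℝ) := by
  constructor
  · intro hcomm
    have hblocks : ∀ o ∈ specialOrthogonalGroup (Fin m) ℝ,
        A.toBlocks₁₁ * o = o * A.toBlocks₁₁ ∧ A.toBlocks₁₂ * o = o * A.toBlocks₁₂ ∧
        A.toBlocks₂₁ * o = o * A.toBlocks₂₁ ∧ A.toBlocks₂₂ * o = o * A.toBlocks₂₂ := by
      intro o ho
      have h := hcomm ⟨o, ho⟩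
      rw [← fromBlocks_toBlocks A, fromBlocks_multiply, fromBlocks_multiply, fromBlocks_inj] at h
      simpa using h
    obtain ⟨f, hf⟩ := eq_smul_one_of_commute_specialOrthogonalGroup hm A.toBlocks₁₁
      fun o ho => (hblocks o ho).1
    obtain ⟨b, hb⟩ := eq_smul_one_of_commute_specialOrthogonalGroup hm A.toBlocks₁₂
      fun o ho => (hblocks o ho).2.1
    obtain ⟨h, hh⟩ := eq_smul_one_of_commute_specialOrthogonalGroup hm A.toBlocks₂₂
      fun o ho => (hblocks o ho).2.2.2
    refine ⟨f, h, b, hf, hh, hb, ?_⟩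
    have htr : A.toBlocks₂₁ = A.toBlocks₁₂ᵀ := by
      ext i j
      exact hA.apply _ _
    rw [htr, hb, transpose_smul, transpose_one]
  · rintro ⟨f, h, b, hf, hh, hb, hb'⟩ o
    rw [← fromBlocks_toBlocks A, hf, hh, hb, hb', fromBlocks_multiply, fromBlocks_multiply]
    simp
end

section
/- Let A be a real 4×4 matrix, written in 2×2 blocks as A = [[A₁₁, A₁₂],[A₂₁, A₂₂]], which is symmetric (Aᵀ = A). Then A commutes with the block-diagonal matrix diag(o, o) for every o in SO(2) if and only if there exist real numbers f, h, b, c such that A₁₁ = f·1₂, A₂₂ = h·1₂, A₂₁ = [[b, −c],[c, b]] and A₁₂ = [[b, c],[−c, b]]; that is, A = [[f,0,b,c],[0,f,−c,b],[b,−c,h,0],[c,b,0,h]]. -/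
/-!
The blocks of a matrix commuting with `diag(o, o)` commute with `o` one by one. Taking for `o` the
quarter turn `J` forces each block into the commutant of `J`, the matrices `[[p, -q], [q, p]]`
(`comm_quarterTurn`). Symmetry of `A` makes the diagonal blocks symmetric, which kills their `q`,
and makes `A₁₂` the transpose of `A₂₁`. Conversely every rotation is itself of the form
`[[x, -y], [y, x]]` (`rotation_entries`), and such matrices commute with each other.
-/

theorem quarterTurn_mem :
    (!![0, -1; 1, 0] : Matrix (Fin 2) (Fin 2) ℝ) ∈ Matrix.specialOrthogonalGroup (Fin 2) ℝ := by
  rw [Matrix.mem_specialOrthogonalGroup_iff, Matrix.mem_orthogonalGroup_iff]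
  refine ⟨?_, by simp [Matrix.det_fin_two]⟩
  ext i j
  fin_cases i <;> fin_cases j <;> simp [Matrix.mul_apply, Matrix.star_eq_conjTranspose]

theorem comm_quarterTurn {M : Matrix (Fin 2) (Fin 2) ℝ}
    (h : M * !![0, -1; 1, 0] = !![0, -1; 1, 0] * M) : M 1 1 = M 0 0 ∧ M 0 1 = -M 1 0 := by
  have h00 := congrFun (congrFun h 0) 0
  have h01 := congrFun (congrFun h 0) 1
  simp [Matrix.mul_apply, Fin.sum_univ_two] at h00 h01
  constructor <;> linarith

theorem rotation_entries {o : Matrix (Fin 2) (Fin 2) ℝ}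
    (ho : o ∈ Matrix.specialOrthogonalGroup (Fin 2) ℝ) : o 1 1 = o 0 0 ∧ o 0 1 = -o 1 0 := by
  rw [Matrix.mem_specialOrthogonalGroup_iff, Matrix.mem_orthogonalGroup_iff] at ho
  obtain ⟨h, hdet⟩ := ho
  have h00 := congrFun (congrFun h 0) 0
  have h11 := congrFun (congrFun h 1) 1
  simp [Matrix.mul_apply, Fin.sum_univ_two, Matrix.star_eq_conjTranspose] at h00 h11
  rw [Matrix.det_fin_two] at hdet
  -- The squared norms of the two rows sum to `2`, which is twice the determinant.
  have key : (o 1 1 - o 0 0) ^ 2 + (o 0 1 + o 1 0) ^ 2 = 0 := by linarith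
  have h1 : o 1 1 - o 0 0 = 0 := by
    apply pow_eq_zero_iff two_ne_zero |>.mp
    linarith [sq_nonneg (o 1 1 - o 0 0), sq_nonneg (o 0 1 + o 1 0)]
  have h2 : o 0 1 + o 1 0 = 0 := by
    apply pow_eq_zero_iff two_ne_zero |>.mp
    linarith [sq_nonneg (o 1 1 - o 0 0), sq_nonneg (o 0 1 + o 1 0)]
  constructor <;> linarith

/-- **SO(2) (exceptional) case of the commutant Lemma.**
A symmetric real `4×4` matrix, written in `2×2` blocks, commutes with the
block-diagonal matrix `diag(o, o)` for every `o ∈ SO(2)` if and only if there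
exist real numbers `f, h, b, c` with `A₁₁ = f·1₂`, `A₂₂ = h·1₂`,
`A₂₁ = [[b, −c],[c, b]]` and `A₁₂ = [[b, c],[−c, b]]`. -/
theorem statement2
    (A : Matrix (Fin 2 ⊕ Fin 2) (Fin 2 ⊕ Fin 2) ℝ) (hA : A.IsSymm) :
    (∀ o : Matrix.specialOrthogonalGroup (Fin 2) ℝ,
        A * Matrix.fromBlocks (o : Matrix (Fin 2) (Fin 2) ℝ) 0 0 (o : Matrix (Fin 2) (Fin 2) ℝ)
          = Matrix.fromBlocks (o : Matrix (Fin 2) (Fin 2) ℝ) 0 0 (o : Matrix (Fin 2) (Fin 2) ℝ) * A)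
      ↔ ∃ f h b c : ℝ,
          A.toBlocks₁₁ = f • (1 : Matrix (Fin 2) (Fin 2) ℝ) ∧
          A.toBlocks₂₂ = h • (1 : Matrix (Fin 2) (Fin 2) ℝ) ∧
          A.toBlocks₂₁ = !![b, -c; c, b] ∧
          A.toBlocks₁₂ = !![b, c; -c, b] := by
  rw [← Matrix.fromBlocks_toBlocks A, Matrix.isSymm_fromBlocks_iff] at hA
  obtain ⟨s11, s12, -, s22⟩ := hA
  rw [← Matrix.fromBlocks_toBlocks A]
  generalize A.toBlocks₁₁ = P at *
  generalize A.toBlocks₁₂ = Q at *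
  generalize A.toBlocks₂₁ = R at *
  generalize A.toBlocks₂₂ = S at *
  simp only [Matrix.fromBlocks_multiply, Matrix.mul_zero, Matrix.zero_mul, add_zero, zero_add,
    Matrix.fromBlocks_inj, Matrix.toBlocks_fromBlocks₁₁, Matrix.toBlocks_fromBlocks₁₂,
    Matrix.toBlocks_fromBlocks₂₁, Matrix.toBlocks_fromBlocks₂₂]
  constructor
  · intro H
    obtain ⟨hP, -, hR, hS⟩ := H ⟨_, quarterTurn_mem⟩
    obtain ⟨p1, p2⟩ := comm_quarterTurn hP
    obtain ⟨r1, r2⟩ := comm_quarterTurn hR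
    obtain ⟨t1, t2⟩ := comm_quarterTurn hS
    have p3 := s11.apply 0 1
    have t3 := s22.apply 0 1
    refine ⟨P 0 0, S 0 0, R 0 0, R 1 0, ?_, ?_, ?_, ?_⟩
    · ext i j
      fin_cases i <;> fin_cases j <;> simp <;> linarith
    · ext i j
      fin_cases i <;> fin_cases j <;> simp <;> linarith
    · ext i j
      fin_cases i <;> fin_cases j <;> simp <;> linarith
    · obtain rfl : Q = R.transpose := by rw [← s12, Matrix.transpose_transpose]
      ext i j
      fin_cases i <;> fin_cases j <;> simp <;> linarith
  · rintro ⟨f, h, b, c, rfl, rfl, rfl, rfl⟩ ⟨o, ho⟩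
    obtain ⟨o1, o2⟩ := rotation_entries ho
    refine ⟨by simp, ?_, ?_, by simp⟩ <;> ext i j <;> fin_cases i <;> fin_cases j <;>
      simp [Matrix.mul_apply, Fin.sum_univ_two, o1, o2] <;> ring
end

section
/- Let f, h, b, c be real numbers, let G be the real symmetric 4×4 matrix G = [[f,0,b,c],[0,f,−c,b],[b,−c,h,0],[c,b,0,h]], and set Δ = f·h − b² − c². Then the following are equivalent: (1) Δ < 0; (2) exactly two of the four (real) eigenvalues of G, counted with multiplicity, are positive and exactly two are negative, i.e. G has signature (2,2). -/
open Matrix Finset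

/-!
The characteristic polynomial of `G` is the square of `X² - (f + h) X + Δ`, where
`Δ = f h - b² - c²`. The discriminant of this quadratic is `(f - h)² + 4 (b² + c²) ≥ 0`, so it
has two real roots `p`, `q` with `p q = Δ`, and the eigenvalues of `G` are `p, p, q, q`.
Hence the signature is `(2, 2)` exactly when `p` and `q` have opposite signs, i.e. when `Δ < 0`.
-/

theorem ciconia_charpoly (f h b c p q : ℝ) (hs : p + q = f + h)
    (hp : p * q = f * h - b ^ 2 - c ^ 2) :
    (!![f, 0, b, c; 0, f, -c, b; b, -c, h, 0; c, b, 0, h] : Matrix (Fin 4) (Fin 4) ℝ).charpoly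
      = (({p, p, q, q} : Multiset ℝ).map fun a => Polynomial.X - Polynomial.C a).prod := by
  have hs' := congrArg (Polynomial.C : ℝ → Polynomial ℝ) hs
  have hp' := congrArg (Polynomial.C : ℝ → Polynomial ℝ) hp
  simp only [map_add, map_sub, map_mul, map_pow] at hs' hp'
  have h1 : (!![f, 0, b, c; 0, f, -c, b; b, -c, h, 0; c, b, 0, h] :
      Matrix (Fin 4) (Fin 4) ℝ).charpoly = (Polynomial.X ^ 2
        - (Polynomial.C f + Polynomial.C h) * Polynomial.X
        + (Polynomial.C f * Polynomial.C h - Polynomial.C b ^ 2 - Polynomial.C c ^ 2)) ^ 2 := by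
    simp [Matrix.charpoly, Matrix.charmatrix, Matrix.det_succ_row_zero, Fin.sum_univ_succ,
      Fin.succAbove, Matrix.diagonal]
    ring
  rw [h1, ← hs', ← hp']
  simp
  ring

/-- The eigenvalues of `G`, with multiplicity, are the roots `p`, `q` of `X² - (f + h) X + Δ`,
each taken twice. -/
theorem ciconia_eigenvalues (f h b c p q : ℝ) (hs : p + q = f + h)
    (hp : p * q = f * h - b ^ 2 - c ^ 2) (G : Matrix (Fin 4) (Fin 4) ℝ)
    (hGdef : G = !![f, 0, b, c; 0, f, -c, b; b, -c, h, 0; c, b, 0, h])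
    (hG : G.IsHermitian) :
    Multiset.map hG.eigenvalues Finset.univ.val = {p, p, q, q} := by
  have h1 := hG.roots_charpoly_eq_eigenvalues
  have h2 : G.charpoly = _ := hGdef ▸ ciconia_charpoly f h b c p q hs hp
  rw [h2, Polynomial.roots_multiset_prod_X_sub_C] at h1
  exact h1.symm

/-- **Signature of the ciconia metric, split case.**
For the symmetric matrix `G = [[f,0,b,c],[0,f,−c,b],[b,−c,h,0],[c,b,0,h]]` and
`Δ = f·h − b² − c²`: `Δ < 0` holds if and only if exactly two of the four real
eigenvalues of `G` (with multiplicity) are positive and exactly two are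
negative, i.e. `G` has signature `(2,2)`. -/
theorem statement4 (f h b c : ℝ)
    (G : Matrix (Fin 4) (Fin 4) ℝ)
    (hGdef : G = !![f, 0, b, c; 0, f, -c, b; b, -c, h, 0; c, b, 0, h])
    (hG : G.IsHermitian) :
    f * h - b ^ 2 - c ^ 2 < 0 ↔
      (Finset.univ.filter fun i => 0 < hG.eigenvalues i).card = 2 ∧
      (Finset.univ.filter fun i => hG.eigenvalues i < 0).card = 2 := by
  obtain ⟨p, q, hs, hp⟩ : ∃ p q : ℝ, p + q = f + h ∧ p * q = f * h - b ^ 2 - c ^ 2 := by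
    have hd : 0 ≤ (f - h) ^ 2 + 4 * (b ^ 2 + c ^ 2) := by positivity
    have hsq := Real.sq_sqrt hd
    set s := √((f - h) ^ 2 + 4 * (b ^ 2 + c ^ 2))
    exact ⟨(f + h + s) / 2, (f + h - s) / 2, by ring, by linarith⟩
  have he := ciconia_eigenvalues f h b c p q hs hp G hGdef hG
  have hpos : (Finset.univ.filter fun i => 0 < hG.eigenvalues i).card
      = Multiset.countP (fun x : ℝ => 0 < x) {p, p, q, q} := by
    rw [← he, Multiset.countP_map]; rfl
  have hneg : (Finset.univ.filter fun i => hG.eigenvalues i < 0).card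
      = Multiset.countP (fun x : ℝ => x < 0) {p, p, q, q} := by
    rw [← he, Multiset.countP_map]; rfl
  rw [hpos, hneg, ← hp, mul_neg_iff]
  simp only [Multiset.insert_eq_cons, ← Multiset.cons_zero, Multiset.countP_cons,
    Multiset.countP_zero]
  rcases lt_trichotomy p 0 with h1 | h1 | h1 <;> rcases lt_trichotomy q 0 with h2 | h2 | h2 <;>
    simp [h1, h2, h1.le, h2.le, h1.not_gt, h2.not_gt]
end

section
/- Let U ⊆ ℂ be a nonempty connected open set, λ : U → ℝ smooth and positive, Γ = (1/λ)∂λ/∂z. Let f, h ∈ ℝ be constants and let a : U → ℂ be smooth. Then the constant functions f, h and the pullback of a (independent of w) satisfy the Kähler system (∗) at every (z,w) ∈ U × ℂ if and only if a is holomorphic on U (∂a/∂z̄ = 0) and h·∂Γ/∂z̄ = 0 on U (i.e. either h = 0 or the Gauss curvature K vanishes identically). -/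
/-!
Since `f`, `h` are constant and `a` does not depend on `w`, all their derivatives in `w` vanish, and
`∂ā/∂z` is the conjugate of `∂a/∂z̄`. The Kähler system at `(z, w)` therefore reduces to
`conj (∂a/∂z̄) + w̄ · h · ∂Γ/∂z̄ = 0` (`kahlerSystem_const_iff`). For fixed `z` this is affine in `w̄`,
so it holds for all `w` exactly when both coefficients vanish, as seen at `w = 0` and `w = 1`.
-/

open Complex

/-- Wirtinger derivative `∂u/∂z` of a one-variable function. -/
noncomputable def wD (u : ℂ → ℂ) (z : ℂ) : ℂ :=
  (fderiv ℝ u z 1 - Complex.I * fderiv ℝ u z Complex.I) / 2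

/-- Conjugate Wirtinger derivative `∂u/∂z̄` of a one-variable function. -/
noncomputable def wDbar (u : ℂ → ℂ) (z : ℂ) : ℂ :=
  (fderiv ℝ u z 1 + Complex.I * fderiv ℝ u z Complex.I) / 2

/-- Wirtinger derivative `∂u/∂z` in the first variable of `u : ℂ × ℂ → ℂ`. -/
noncomputable def wDz (u : ℂ × ℂ → ℂ) (p : ℂ × ℂ) : ℂ :=
  (fderiv ℝ u p (1, 0) - Complex.I * fderiv ℝ u p (Complex.I, 0)) / 2

/-- Wirtinger derivative `∂u/∂z̄` in the first variable of `u : ℂ × ℂ → ℂ`. -/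
noncomputable def wDzbar (u : ℂ × ℂ → ℂ) (p : ℂ × ℂ) : ℂ :=
  (fderiv ℝ u p (1, 0) + Complex.I * fderiv ℝ u p (Complex.I, 0)) / 2

/-- Wirtinger derivative `∂u/∂w` in the second variable of `u : ℂ × ℂ → ℂ`. -/
noncomputable def wDw (u : ℂ × ℂ → ℂ) (p : ℂ × ℂ) : ℂ :=
  (fderiv ℝ u p (0, 1) - Complex.I * fderiv ℝ u p (0, Complex.I)) / 2

/-- Wirtinger derivative `∂u/∂w̄` in the second variable of `u : ℂ × ℂ → ℂ`. -/
noncomputable def wDwbar (u : ℂ × ℂ → ℂ) (p : ℂ × ℂ) : ℂ :=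
  (fderiv ℝ u p (0, 1) + Complex.I * fderiv ℝ u p (0, Complex.I)) / 2

/-- The Kähler system (∗) for the ciconia metric `g_{f,a,h}` at the point
`p = (z,w)`:  `∂h/∂z = ∂a/∂w + wΓ ∂h/∂w` and
`∂f/∂w + wΓ ∂ā/∂w = ∂ā/∂z + w̄ h ∂Γ/∂z̄`. -/
def KahlerSystem (Γ : ℂ → ℂ) (f a h : ℂ × ℂ → ℂ) (p : ℂ × ℂ) : Prop :=
  wDz h p = wDw a p + p.2 * Γ p.1 * wDw h p ∧
  wDw f p + p.2 * Γ p.1 * wDw (fun q => starRingEnd ℂ (a q)) p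
    = wDz (fun q => starRingEnd ℂ (a q)) p + starRingEnd ℂ p.2 * h p * wDbar Γ p.1

/-- For weights `f, h` constant and `a` pulled back from the base, the first equation of the Kähler
system is trivial and the second one is affine in `w̄`. -/
lemma kahlerSystem_const_iff (Γ : ℂ → ℂ) (f h : ℝ) (a : ℂ → ℂ) (z w : ℂ)
    (ha : DifferentiableAt ℝ a z) :
    KahlerSystem Γ (fun _ => (f : ℂ)) (fun p => a p.1) (fun _ => (h : ℂ)) (z, w) ↔
      starRingEnd ℂ (wDbar a z) + starRingEnd ℂ w * ((h : ℂ) * wDbar Γ z) = 0 := by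
  have h1 : HasFDerivAt (fun p : ℂ × ℂ => a p.1)
      ((fderiv ℝ a z).comp (ContinuousLinearMap.fst ℝ ℂ ℂ)) (z, w) :=
    HasFDerivAt.comp (z, w) (g := a) ha.hasFDerivAt hasFDerivAt_fst
  have h2 : HasFDerivAt (fun p : ℂ × ℂ => starRingEnd ℂ (a p.1))
      ((conjCLE : ℂ →L[ℝ] ℂ).comp
        ((fderiv ℝ a z).comp (ContinuousLinearMap.fst ℝ ℂ ℂ))) (z, w) :=
    HasFDerivAt.comp (z, w) (g := conjCLE) conjCLE.hasFDerivAt h1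
  simp only [KahlerSystem, wDz, wDw, h1.fderiv, h2.fderiv]
  have h3 : starRingEnd ℂ 2 = 2 := map_ofNat _ 2
  simp [wDbar, mul_assoc, eq_comm, sub_eq_add_neg, h3]

/-- **Corollary: constant weights `f, h` and base-dependent `a`.**
With `f, h` real constants and `a` smooth on the base `U`, the Kähler system
(∗) holds on all of `U × ℂ` if and only if `a` is holomorphic on `U` and
`h·∂Γ/∂z̄ = 0` on `U` (i.e. `h = 0` or the Gauss curvature vanishes). -/
theorem statement14 (U : Set ℂ) (hUconn : IsConnected U) (hU : IsOpen U)
    (lam : ℂ → ℝ) (hlam : ContDiffOn ℝ (⊤ : ℕ∞) lam U) (hlampos : ∀ z ∈ U, 0 < lam z)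
    (Γ : ℂ → ℂ) (hΓ : ∀ z ∈ U, Γ z = (↑(lam z))⁻¹ * wD (fun z => (lam z : ℂ)) z)
    (f h : ℝ) (a : ℂ → ℂ) (ha : ContDiffOn ℝ (⊤ : ℕ∞) a U) :
    (∀ z ∈ U, ∀ w : ℂ, KahlerSystem Γ
        (fun _ => (f : ℂ)) (fun p => a p.1) (fun _ => (h : ℂ)) (z, w)) ↔
      ((∀ z ∈ U, wDbar a z = 0) ∧ ∀ z ∈ U, (h : ℂ) * wDbar Γ z = 0) := by
  have key := fun z (hz : z ∈ U) w => kahlerSystem_const_iff Γ f h a z w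
    ((ha.contDiffAt (hU.mem_nhds hz)).differentiableAt (by simp))
  constructor
  · intro H
    have hbar : ∀ z ∈ U, wDbar a z = 0 := fun z hz => by
      simpa using (key z hz 0).1 (H z hz 0)
    refine ⟨hbar, fun z hz => ?_⟩
    have := (key z hz 1).1 (H z hz 1)
    rwa [hbar z hz, map_zero, map_one, zero_add, one_mul] at this
  · rintro ⟨hbar, hcurv⟩ z hz w
    rw [key z hz w, hbar z hz, hcurv z hz, map_zero, mul_zero, add_zero]
end

section
/- Let Kc ∈ ℝ with Kc ≠ 0, α ≥ 0, and let I ⊆ (0,∞) be a nonempty open interval. (a) Suppose c₀ ∈ ℝ is such that −Kc·(α s² + c₀ s − 1)/s > 0 for all s ∈ I; define f(s) = √(−Kc·(α s² + c₀ s − 1)/s) and h(s) = (α s² + 1)/(s²·f(s)) on I. Then f(s)·h(s) − α = 1/s² and 2·f'(s) = −Kc·h(s) for all s ∈ I. (b) Conversely, if f, h : I → ℝ are differentiable with f > 0 on I and satisfy f(s)·h(s) − α = 1/s² and 2·f'(s) = −Kc·h(s) for all s ∈ I, then there exists c₀ ∈ ℝ such that f(s)² = −Kc·(α s² + c₀ s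 − 1)/s for all s ∈ I, and then h(s) = (α s² + 1)/(s²·f(s)). -/
/-!
Along a solution, `(f²)' = 2 f f' = -Kc f h = -Kc (α + 1 / s²)`, and the right-hand side is the
derivative of `-Kc (α s² + c₀ s - 1) / s` for every `c₀` (`hasDerivAt_radicand`). Differentiating
the square root gives (a). For (b), `f²` and the function with `c₀ = 0` have the same derivative on
the interval, so they differ by a constant `c = -Kc c₀`. The formula for `h` is the first equation
solved for `h`.
-/

lemma hasDerivAt_radicand (Kc α c₀ : ℝ) {s : ℝ} (hs : s ≠ 0) :
    HasDerivAt (fun t : ℝ => -Kc * (α * t ^ 2 + c₀ * t - 1) / t) (-Kc * (α + 1 / s ^ 2)) s := by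
  have h1 : HasDerivAt (fun t : ℝ => -Kc * (α * t ^ 2 + c₀ * t - 1))
      (-Kc * (α * (2 * s) + c₀)) s := by
    have h2 := ((((hasDerivAt_pow 2 s).const_mul α).add
      ((hasDerivAt_id s).const_mul c₀)).sub_const 1).const_mul (-Kc)
    exact h2.congr_deriv (by norm_num)
  refine (h1.div (hasDerivAt_id' s) hs).congr_deriv ?_
  field_simp
  ring

/-- **General solution of the Kähler Ricci-flat system for `K ≠ 0`.**
On a nonempty open interval `I ⊆ (0,∞)` (in the variable `s = r²`), with
`Kc ≠ 0` and `α = |a|² ≥ 0`: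
(a) the functions `f(s) = √(−Kc(αs² + c₀s − 1)/s)` and
`h(s) = (αs² + 1)/(s²f(s))` solve `f·h − α = 1/s²` and `2f' = −Kc·h`, provided
`−Kc(αs² + c₀s − 1)/s > 0` on `I`;
(b) conversely, every differentiable positive solution `f` (with `h`) of this
system is of this form for some constant `c₀`. -/
theorem statement16 (Kc : ℝ) (hKc : Kc ≠ 0) (α : ℝ) (hα : 0 ≤ α)
    (I : Set ℝ) (hIne : I.Nonempty) (hIopen : IsOpen I) (hIconn : I.OrdConnected)
    (hIpos : I ⊆ Set.Ioi (0 : ℝ)) :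
    (∀ c₀ : ℝ, (∀ s ∈ I, 0 < -Kc * (α * s ^ 2 + c₀ * s - 1) / s) →
      ∀ f h : ℝ → ℝ,
        (∀ s ∈ I, f s = Real.sqrt (-Kc * (α * s ^ 2 + c₀ * s - 1) / s)) →
        (∀ s ∈ I, h s = (α * s ^ 2 + 1) / (s ^ 2 * f s)) →
        ∀ s ∈ I, f s * h s - α = 1 / s ^ 2 ∧ 2 * deriv f s = -Kc * h s) ∧
    (∀ f h : ℝ → ℝ,
      (∀ s ∈ I, DifferentiableAt ℝ f s) → (∀ s ∈ I, DifferentiableAt ℝ h s) →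
      (∀ s ∈ I, 0 < f s) →
      (∀ s ∈ I, f s * h s - α = 1 / s ^ 2) →
      (∀ s ∈ I, 2 * deriv f s = -Kc * h s) →
      ∃ c₀ : ℝ, ∀ s ∈ I,
        f s ^ 2 = -Kc * (α * s ^ 2 + c₀ * s - 1) / s ∧
        h s = (α * s ^ 2 + 1) / (s ^ 2 * f s)) := by
  constructor
  · intro c₀ hpos f h hf hh s hs
    have hs0 : s ≠ 0 := (hIpos hs).ne'
    have hfs : f s ≠ 0 := by
      rw [hf s hs]
      exact (Real.sqrt_pos.2 (hpos s hs)).ne'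
    have hfeq : f =ᶠ[nhds s] fun t => Real.sqrt (-Kc * (α * t ^ 2 + c₀ * t - 1) / t) :=
      Filter.eventually_of_mem (hIopen.mem_nhds hs) hf
    have hd := ((hasDerivAt_radicand Kc α c₀ hs0).sqrt (hpos s hs).ne').congr_of_eventuallyEq hfeq
    rw [← hf s hs] at hd
    rw [hd.deriv, hh s hs]
    constructor
    · field_simp
      ring
    · field_simp
  · intro f h hf _ hfpos h1 h2
    have hF : ∀ s ∈ I, HasDerivAt
        (fun t => f t ^ 2 - -Kc * (α * t ^ 2 + 0 * t - 1) / t) 0 s := by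
      intro s hs
      refine (((hf s hs).hasDerivAt.pow 2).sub
        (hasDerivAt_radicand Kc α 0 (hIpos hs).ne')).congr_deriv ?_
      have e1 := h1 s hs
      have e2 := h2 s hs
      push_cast
      rw [← e1]
      linear_combination f s * e2
    obtain ⟨c, hc⟩ := hIopen.exists_is_const_of_deriv_eq_zero hIconn.isPreconnected
      (fun s hs => (hF s hs).differentiableAt.differentiableWithinAt)
      (fun s hs => (hF s hs).deriv)
    refine ⟨-c / Kc, fun s hs => ?_⟩
    have hs0 : s ≠ 0 := (hIpos hs).ne'
    have hfs : f s ≠ 0 := (hfpos s hs).ne'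
    constructor
    · rw [sub_eq_iff_eq_add.1 (hc s hs)]
      field_simp
      ring
    · have e1 := h1 s hs
      field_simp at e1 ⊢
      linear_combination e1
end
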